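/- arXiv:1709.04379 — 2 statements merged into one kernel-verified Lean document; each statement's English description precedes it below -/
import Mathlib

section
/- Let θ = (1+√5)/2, θ̄ = (1−√5)/2, O_L = ℤ[i][θ], σ(a + bθ) = a + bθ̄. Let β₁, …, β_K ∈ O_L be nonzero elements whose generated ideals are pairwise comaximal (β_s O_L + β_t O_L = O_L for s ≠ t). For every subset S ⊆ {1, …, K}, setting B = ∏_{s∈S} β_s, the minimum of |x₀σ(x₀) − i·x₁σ(x₁)|² over (x₀, x₁) ∈ (B·O_L)² \ {(0,0)} equals ∏_{s∈S} N(β_s O_L), where N denotes the absolute ideal norm. (Hence the minimum determinant of the layered Golden-coded index code given side information indexed by S is δ(C_S) = δ(C)·∏_{s∈S} N(β_s O_L), corresponding to a normalized side information gain of exactly 20 log₁₀ 2 ≈ 6.02 dB per bit per real symbol.) -/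
noncomputable section

open Complex GaussianInt

/-- `θ = (1+√5)/2` as a complex number. -/
def thC : ℂ := (1 + Real.sqrt 5) / 2

/-- `θ̄ = (1−√5)/2` as a complex number. -/
def thbC : ℂ := (1 - Real.sqrt 5) / 2

/-- The ring of integers `O_L = ℤ[i][θ]` of `L = ℚ(i,√5)`, realized as the subring of
`ℂ` generated by `i` and `θ`. -/
def OL : Subring ℂ := Subring.closure {Complex.I, thC}

/-- The reduction `ℤ[i] → 𝔽₅`, `i ↦ 2`. -/
def phi5 : GaussianInt →+* ZMod 5 := Zsqrtd.lift ⟨2, by decide⟩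

theorem phi5_apply (x : GaussianInt) : phi5 x = (x.re : ZMod 5) + x.im * 2 := rfl

theorem phi5_zero (x : GaussianInt) (h : phi5 x = 0) :
    ∃ y : GaussianInt, x = ⟨2, -1⟩ * y := by
  rw [phi5_apply] at h
  have h' : ((x.re + x.im * 2 : ℤ) : ZMod 5) = 0 := by push_cast; exact h
  rw [ZMod.intCast_zmod_eq_zero_iff_dvd] at h'
  obtain ⟨k, hk⟩ := h'
  push_cast at hk
  refine ⟨⟨2 * k - x.im, k⟩, ?_⟩
  rw [Zsqrtd.ext_iff]
  simp only [Zsqrtd.re_mul, Zsqrtd.im_mul]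
  constructor <;> linarith

theorem zmod5_aux : ∀ u w : ZMod 5, u * u = 2 * (w * w) → u = 0 ∧ w = 0 := by decide

theorem zmod5_aux1 : ∀ a b c d : ZMod 5, a * a + a * b - b * b = 2 * (c * c + c * d - d * d) →
    2 * a + b = 0 ∧ 2 * c + d = 0 := by
  intro a b c d h
  apply zmod5_aux
  have h5 : (5 : ZMod 5) = 0 := rfl
  linear_combination 4 * h + (b * b - 2 * d * d) * h5

theorem norm_descent (n : ℕ) : ∀ a b c d : GaussianInt,
    (a.norm.natAbs + b.norm.natAbs + c.norm.natAbs + d.norm.natAbs ≤ n) →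
    a * a + a * b - b * b = ⟨0, 1⟩ * (c * c + c * d - d * d) →
    a = 0 ∧ b = 0 ∧ c = 0 ∧ d = 0 := by
  induction n using Nat.strong_induction_on with
  | _ n ih =>
  intro a b c d hn h
  have hI : phi5 ⟨0, 1⟩ = 2 := by simp [phi5_apply]
  have hpi : phi5 ⟨2, 1⟩ = 4 := by simp [phi5_apply]; rfl
  have hpi2 : phi5 ⟨2, -1⟩ = 0 := by simp [phi5_apply]
  have h22 : phi5 2 = 2 := map_ofNat phi5 2
  have h1 := congrArg phi5 h
  simp only [map_add, map_sub, map_mul, hI] at h1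
  obtain ⟨h2, h3⟩ := zmod5_aux1 _ _ _ _ h1
  obtain ⟨u, hu⟩ := phi5_zero (2 * a + b) (by rw [map_add, map_mul, h22]; exact h2)
  obtain ⟨w, hw⟩ := phi5_zero (2 * c + d) (by rw [map_add, map_mul, h22]; exact h3)
  have hne : (⟨2, -1⟩ : GaussianInt) ≠ 0 := by decide
  have h5 : (⟨2, -1⟩ : GaussianInt) * ⟨2, 1⟩ = 5 := by decide
  have h4 : (⟨2, -1⟩ : GaussianInt) * u * u - ⟨2, 1⟩ * b * b =
      ⟨0, 1⟩ * (⟨2, -1⟩ * w * w - ⟨2, 1⟩ * d * d) := by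
    apply mul_left_cancel₀ hne
    linear_combination 4 * h - (2 * a + b + ⟨2, -1⟩ * u) * hu
      + ⟨0, 1⟩ * (2 * c + d + ⟨2, -1⟩ * w) * hw - (b * b - ⟨0, 1⟩ * d * d) * h5
  have h6 := congrArg phi5 h4
  simp only [map_sub, map_mul, hI, hpi, hpi2] at h6
  have h50 : (5 : ZMod 5) = 0 := rfl
  obtain ⟨hb, hd⟩ := zmod5_aux (phi5 b) (phi5 d)
    (by linear_combination h6 + (phi5 b * phi5 b - 2 * phi5 d * phi5 d) * h50)
  have ha : phi5 a = 0 := by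
    have : 2 * phi5 a = 0 := by linear_combination h2 - hb
    have key : ∀ x : ZMod 5, 2 * x = 0 → x = 0 := by decide
    exact key _ this
  have hc : phi5 c = 0 := by
    have : 2 * phi5 c = 0 := by linear_combination h3 - hd
    have key : ∀ x : ZMod 5, 2 * x = 0 → x = 0 := by decide
    exact key _ this
  obtain ⟨a', rfl⟩ := phi5_zero a ha
  obtain ⟨b', rfl⟩ := phi5_zero b hb
  obtain ⟨c', rfl⟩ := phi5_zero c hc
  obtain ⟨d', rfl⟩ := phi5_zero d hd
  have hnorm : (⟨2, -1⟩ : GaussianInt).norm.natAbs = 5 := by decide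
  simp only [Zsqrtd.norm_mul, Int.natAbs_mul, hnorm] at hn
  have hred : a' * a' + a' * b' - b' * b' = ⟨0, 1⟩ * (c' * c' + c' * d' - d' * d') := by
    apply mul_left_cancel₀ (mul_ne_zero hne hne)
    linear_combination h
  by_cases hz : a'.norm.natAbs + b'.norm.natAbs + c'.norm.natAbs + d'.norm.natAbs = 0
  · have key : ∀ x : GaussianInt, x.norm.natAbs = 0 → x = 0 := by
      intro x hx
      exact (Zsqrtd.norm_eq_zero_iff (by norm_num) x).1 (Int.natAbs_eq_zero.1 hx)
    have e1 := key a' (by omega)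
    have e2 := key b' (by omega)
    have e3 := key c' (by omega)
    have e4 := key d' (by omega)
    simp [e1, e2, e3, e4]
  · obtain ⟨e1, e2, e3, e4⟩ := ih _ (by omega) a' b' c' d' le_rfl hred
    simp [e1, e2, e3, e4]

theorem th_sq : thC * thC = thC + 1 := by
  have h : ((Real.sqrt 5 : ℝ) : ℂ) * (Real.sqrt 5 : ℝ) = 5 := by
    rw [← Complex.ofReal_mul, Real.mul_self_sqrt (by norm_num)]; norm_num
  unfold thC
  linear_combination h / 4

theorem thb_eq : thbC = 1 - thC := by
  unfold thC thbC; ring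

theorem rel_norm (a b : GaussianInt) :
    (toComplex a + toComplex b * thC) * (toComplex a + toComplex b * thbC) =
      toComplex (a * a + a * b - b * b) := by
  simp only [map_add, map_sub, map_mul]
  rw [thb_eq]
  linear_combination -(toComplex b * toComplex b) * th_sq

theorem lin_zero (a b : GaussianInt) (h : toComplex a + toComplex b * thC = 0) :
    a = 0 ∧ b = 0 := by
  have h1 := rel_norm a b
  rw [h, zero_mul, eq_comm, toComplex_eq_zero] at h1
  obtain ⟨h2, h3, -⟩ := norm_descent _ a b 0 0 le_rfl (by rw [h1]; simp)
  exact ⟨h2, h3⟩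

theorem toComplex_mem (a : GaussianInt) : toComplex a ∈ OL := by
  rw [toComplex_def]
  exact add_mem (intCast_mem _ _) (mul_mem (intCast_mem _ _) (Subring.subset_closure (by simp)))

theorem lin_mem (a b : GaussianInt) : toComplex a + toComplex b * thC ∈ OL :=
  add_mem (toComplex_mem a) (mul_mem (toComplex_mem b) (Subring.subset_closure (by simp)))

theorem mem_lin (z : ℂ) (hz : z ∈ OL) :
    ∃ a b : GaussianInt, z = toComplex a + toComplex b * thC := by
  unfold OL at hz
  induction hz using Subring.closure_induction with
  | mem x hx =>
    rcases hx with rfl | rfl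
    · exact ⟨⟨0, 1⟩, 0, by simp [toComplex_def]⟩
    · exact ⟨0, 1, by simp⟩
  | zero => exact ⟨0, 0, by simp⟩
  | one => exact ⟨1, 0, by simp⟩
  | add x y _ _ hx hy =>
    obtain ⟨a, b, rfl⟩ := hx
    obtain ⟨c, d, rfl⟩ := hy
    exact ⟨a + c, b + d, by simp only [map_add]; ring⟩
  | neg x _ hx =>
    obtain ⟨a, b, rfl⟩ := hx
    exact ⟨-a, -b, by simp only [map_neg]; ring⟩
  | mul x y _ _ hx hy =>
    obtain ⟨a, b, rfl⟩ := hx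
    obtain ⟨c, d, rfl⟩ := hy
    refine ⟨a * c + b * d, a * d + b * c + b * d, ?_⟩
    simp only [map_add, map_mul]
    linear_combination toComplex b * toComplex d * th_sq

/-- Coordinates on `O_L`. -/
def coordMap : (Fin 4 → ℤ) →ₗ[ℤ] OL :=
  AddMonoidHom.toIntLinearMap
    { toFun := fun v => ⟨toComplex ⟨v 0, v 1⟩ + toComplex ⟨v 2, v 3⟩ * thC, lin_mem _ _⟩
      map_zero' := by
        apply Subtype.ext
        simp [toComplex_def]
      map_add' := by
        intro v w
        apply Subtype.ext
        simp [toComplex_def]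
        ring }

theorem coordMap_coe (v : Fin 4 → ℤ) :
    ((coordMap v : OL) : ℂ) = toComplex ⟨v 0, v 1⟩ + toComplex ⟨v 2, v 3⟩ * thC := rfl

theorem coordMap_bij : Function.Bijective coordMap := by
  constructor
  · rw [injective_iff_map_eq_zero]
    intro v hv
    have h := congrArg (Subtype.val) hv
    rw [coordMap_coe] at h
    obtain ⟨h1, h2⟩ := lin_zero _ _ h
    rw [Zsqrtd.ext_iff] at h1 h2
    ext i
    fin_cases i
    · exact h1.1
    · exact h1.2
    · exact h2.1
    · exact h2.2
  · rintro ⟨z, hz⟩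
    obtain ⟨a, b, rfl⟩ := mem_lin z hz
    exact ⟨![a.re, a.im, b.re, b.im], Subtype.ext rfl⟩

/-- The integral basis `1, i, θ, iθ`. -/
def basisOL : Module.Basis (Fin 4) ℤ OL :=
  Module.Basis.ofEquivFun (LinearEquiv.ofBijective coordMap coordMap_bij).symm

theorem basisOL_repr (v : Fin 4 → ℤ) (i : Fin 4) : basisOL.repr (coordMap v) i = v i := by
  have : (LinearEquiv.ofBijective coordMap coordMap_bij).symm (coordMap v) = v :=
    (LinearEquiv.ofBijective coordMap coordMap_bij).symm_apply_apply v
  unfold basisOL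
  rw [Module.Basis.ofEquivFun_repr_apply, this]

theorem basisOL_apply (i : Fin 4) : basisOL i = coordMap (Pi.single i 1) := by
  unfold basisOL
  simp

/-- Matrix of multiplication by `p + qθ`, rows indexed by the basis vector multiplied. -/
def mulRows (p q : GaussianInt) : Fin 4 → Fin 4 → ℤ :=
  ![![p.re, p.im, q.re, q.im],
    ![-p.im, p.re, -q.im, q.re],
    ![q.re, q.im, p.re + q.re, p.im + q.im],
    ![-q.im, q.re, -p.im - q.im, p.re + q.re]]

theorem mul_basis (p q : GaussianInt) (i : Fin 4) :
    (⟨toComplex p + toComplex q * thC, lin_mem p q⟩ : OL) * basisOL i =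
      coordMap (mulRows p q i) := by
  rw [basisOL_apply]
  apply Subtype.ext
  have hI := Complex.I_mul_I
  fin_cases i <;>
    simp [coordMap_coe, mulRows, toComplex_def, Pi.single_apply]
  · linear_combination (p.im + q.im * thC : ℂ) * hI
  · linear_combination (q.re + q.im * I : ℂ) * th_sq
  · linear_combination (p.im * thC + q.im * thC * thC : ℂ) * hI +
      (q.re * I - q.im : ℂ) * th_sq

theorem card_quot (p q : GaussianInt) (h0 : ¬(p = 0 ∧ q = 0))
    (hm : toComplex p + toComplex q * thC ∈ OL) :
    (Nat.card (↥OL ⧸ Ideal.span {(⟨toComplex p + toComplex q * thC, hm⟩ : OL)}) : ℝ) =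
      Complex.normSq (toComplex (p * p + p * q - q * q)) := by
  have hx : (⟨toComplex p + toComplex q * thC, hm⟩ : OL) ≠ 0 := by
    intro h
    exact h0 (lin_zero p q (congrArg Subtype.val h))
  have h1 := AddSubgroup.index_eq_natAbs_det basisOL
    (Ideal.span {(⟨toComplex p + toComplex q * thC, hm⟩ : OL)}).toAddSubgroup
    (Ideal.basisSpanSingleton basisOL hx)
  have h2 : (basisOL.det fun i => ((Ideal.basisSpanSingleton basisOL hx i : _) : OL)) =
      (p * p + p * q - q * q).norm := by
    rw [Module.Basis.det_apply, ← Matrix.det_transpose]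
    have : (basisOL.toMatrix fun i => ((Ideal.basisSpanSingleton basisOL hx i : _) : OL)).transpose
        = Matrix.of (mulRows p q) := by
      ext i j
      rw [Matrix.transpose_apply, Module.Basis.toMatrix_apply, Ideal.basisSpanSingleton_apply,
        mul_basis, basisOL_repr, Matrix.of_apply]
    rw [this]
    simp [Matrix.det_succ_row_zero, Fin.sum_univ_succ, mulRows, Zsqrtd.norm_def, Fin.succAbove]
    ring
  have h3 : Nat.card (↥OL ⧸ Ideal.span {(⟨toComplex p + toComplex q * thC, hm⟩ : OL)}) =
      (p * p + p * q - q * q).norm.natAbs := by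
    rw [← h2]; exact h1
  rw [h3, natCast_natAbs_norm, intCast_real_norm]

/-- Let `β 1, …, β K` be nonzero elements `βₛ = pₛ + qₛθ` of `O_L = ℤ[i][θ]` whose
generated ideals are pairwise comaximal.  For every subset `S ⊆ {1,…,K}`, with
`B = ∏_{s∈S} βₛ` (so `σ(B) = ∏_{s∈S} σ(βₛ)`), the minimum of
`|x₀σ(x₀) − i·x₁σ(x₁)|²` over `(x₀,x₁) ∈ (B·O_L)² \ {(0,0)}` equals
`∏_{s∈S} N(βₛO_L)`, where `N` is the absolute ideal norm `N(I) = |O_L/I|`. -/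
theorem stmt7 {K : ℕ} (β : Fin K → GaussianInt × GaussianInt)
    (hβ0 : ∀ s, ¬((β s).1 = 0 ∧ (β s).2 = 0))
    (hmem : ∀ s, toComplex (β s).1 + toComplex (β s).2 * thC ∈ OL)
    (hcomax : ∀ s t, s ≠ t →
      Ideal.span {(⟨toComplex (β s).1 + toComplex (β s).2 * thC, hmem s⟩ : OL)} ⊔
        Ideal.span {(⟨toComplex (β t).1 + toComplex (β t).2 * thC, hmem t⟩ : OL)} = ⊤)
    (S : Finset (Fin K)) :
    IsLeast { r : ℝ | ∃ a b c d : GaussianInt, ¬(a = 0 ∧ b = 0 ∧ c = 0 ∧ d = 0) ∧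
      r = Complex.normSq
        (((∏ s ∈ S, (toComplex (β s).1 + toComplex (β s).2 * thC))
              * (toComplex a + toComplex b * thC))
            * ((∏ s ∈ S, (toComplex (β s).1 + toComplex (β s).2 * thbC))
              * (toComplex a + toComplex b * thbC))
          - Complex.I *
            (((∏ s ∈ S, (toComplex (β s).1 + toComplex (β s).2 * thC))
                * (toComplex c + toComplex d * thC))
              * ((∏ s ∈ S, (toComplex (β s).1 + toComplex (β s).2 * thbC))
                * (toComplex c + toComplex d * thbC)))) }
      (∏ s ∈ S, (Nat.card
        (↥OL ⧸ Ideal.span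
          {(⟨toComplex (β s).1 + toComplex (β s).2 * thC, hmem s⟩ : OL)}) : ℝ)) := by
  have hB : ∀ y z : ℂ, (((∏ s ∈ S, (toComplex (β s).1 + toComplex (β s).2 * thC)) * y)
      * ((∏ s ∈ S, (toComplex (β s).1 + toComplex (β s).2 * thbC)) * z)) =
      (∏ s ∈ S, toComplex ((β s).1 * (β s).1 + (β s).1 * (β s).2 - (β s).2 * (β s).2))
        * (y * z) := by
    intro y z
    simp only [← rel_norm, Finset.prod_mul_distrib]
    ring
  have hcard : (∏ s ∈ S, (Nat.card
        (↥OL ⧸ Ideal.span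
          {(⟨toComplex (β s).1 + toComplex (β s).2 * thC, hmem s⟩ : OL)}) : ℝ)) =
      Complex.normSq (∏ s ∈ S,
        toComplex ((β s).1 * (β s).1 + (β s).1 * (β s).2 - (β s).2 * (β s).2)) := by
    rw [map_prod]
    exact Finset.prod_congr rfl fun s _ => card_quot _ _ (hβ0 s) (hmem s)
  rw [hcard]
  simp only [hB, rel_norm]
  constructor
  · refine ⟨1, 0, 0, 0, by simp, ?_⟩
    simp
  · rintro r ⟨a, b, c, d, hne, rfl⟩
    have hI : Complex.I = toComplex ⟨0, 1⟩ := by simp [toComplex_def]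
    have h1 : ∀ P : ℂ, P * toComplex (a * a + a * b - b * b) -
        Complex.I * (P * toComplex (c * c + c * d - d * d)) =
        P * toComplex (a * a + a * b - b * b - ⟨0, 1⟩ * (c * c + c * d - d * d)) := by
      intro P
      rw [hI, map_sub toComplex (a * a + a * b - b * b), map_mul toComplex ⟨0, 1⟩]
      ring
    rw [h1, Complex.normSq_mul]
    apply le_mul_of_one_le_right (Complex.normSq_nonneg _)
    rw [← intCast_real_norm]
    have h2 : a * a + a * b - b * b - ⟨0, 1⟩ * (c * c + c * d - d * d) ≠ 0 := by
      intro h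
      exact hne (norm_descent _ a b c d le_rfl (sub_eq_zero.1 h))
    have h3 := norm_pos.2 h2
    exact_mod_cast h3
end
end

section
/- Let ω = e^{2πi/3}, θ₁ = 2cos(2π/7), θ₂ = θ₁² − 2, θ₃ = θ₂² − 2, and let O_L = ℤ[ω][θ₁] with the automorphism σ determined by σ(θ₁) = θ₂ (acting coefficientwise on ℤ[ω]-combinations of 1, θ₁, θ₁²). For every nonzero β ∈ O_L, the minimum of |det([[x₀, x₁, x₂], [ω·σ(x₂), σ(x₀), σ(x₁)], [ω·σ²(x₁), ω·σ²(x₂), σ²(x₀)]])|² over all triples (x₀, x₁, x₂) ∈ (β·O_L)³ with (x₀, x₁, x₂) ≠ (0, 0, 0) equals |β·σ(β)·σ²(β)|², which equals the absolute norm of the ideal β·O_L. -/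
noncomputable section

open Complex

/-- `ω = e^{2πi/3}`, the primitive cube root of unity. -/
def om : ℂ := Complex.exp (2 * Real.pi * Complex.I / 3)

/-- `θ₁ = 2cos(2π/7)`. -/
def t1 : ℂ := 2 * Real.cos (2 * Real.pi / 7)

/-- `θ₂ = θ₁² − 2`. -/
def t2 : ℂ := t1 ^ 2 - 2

/-- `θ₃ = θ₂² − 2`. -/
def t3 : ℂ := t2 ^ 2 - 2

/-- The Eisenstein integer `p.1 + p.2·ω` as a complex number. -/
def E (p : ℤ × ℤ) : ℂ := (p.1 : ℂ) + (p.2 : ℂ) * om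

/-- `X a b c ℓ t = a_ℓ + b_ℓ·t + c_ℓ·t²` evaluated at `t ∈ {θ₁, θ₂, θ₃}`. -/
def X (a b c : Fin 3 → ℤ × ℤ) (ℓ : Fin 3) (t : ℂ) : ℂ :=
  E (a ℓ) + E (b ℓ) * t + E (c ℓ) * t ^ 2

/-- The ring of integers `O_L = ℤ[ω][θ₁]` of `L = ℚ(ω,θ₁)`, realized as the subring
of `ℂ` generated by `ω` and `θ₁`. -/
def OL3 : Subring ℂ := Subring.closure {om, t1}


/-- The relative norm of `a + b θ + c θ²`. -/
def nrm {A : Type*} [CommRing A] (a b c : A) : A :=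
    (1)*(a*a*a) + (-1)*(a*a*b) + (5)*(a*a*c) + (-2)*(a*b*b) + (-1)*(a*b*c) + (6)*(a*c*c) +
    (1)*(b*b*b) + (-1)*(b*b*c) + (-2)*(b*c*c) + (1)*(c*c*c)

/-- The relative trace of `x₀ σ(x₁) σ²(x₂)` where `x_ℓ = a_ℓ + b_ℓ θ + c_ℓ θ²`. -/
def trc {A : Type*} [CommRing A] (a0 b0 c0 a1 b1 c1 a2 b2 c2 : A) : A :=
    (3)*(a0*a1*a2) + (-1)*(a0*a1*b2) + (5)*(a0*a1*c2) + (-1)*(a0*b1*a2) + (-2)*(a0*b1*b2) +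
    (-4)*(a0*b1*c2) + (5)*(a0*c1*a2) + (3)*(a0*c1*b2) + (6)*(a0*c1*c2) + (-1)*(b0*a1*a2) +
    (-2)*(b0*a1*b2) + (3)*(b0*a1*c2) + (-2)*(b0*b1*a2) + (3)*(b0*b1*b2) + (-1)*(b0*b1*c2) +
    (-4)*(b0*c1*a2) + (-1)*(b0*c1*b2) + (-2)*(b0*c1*c2) + (5)*(c0*a1*a2) + (-4)*(c0*a1*b2) +
    (6)*(c0*a1*c2) + (3)*(c0*b1*a2) + (-1)*(c0*b1*b2) + (-2)*(c0*b1*c2) + (6)*(c0*c1*a2) +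
    (-2)*(c0*c1*b2) + (3)*(c0*c1*c2)

/-- The reduced norm. -/
def rdn {A : Type*} [CommRing A] (w : A) (a b c : Fin 3 → A) : A :=
  nrm (a 0) (b 0) (c 0) + w * nrm (a 1) (b 1) (c 1) + w ^ 2 * nrm (a 2) (b 2) (c 2)
    - w * trc (a 0) (b 0) (c 0) (a 1) (b 1) (c 1) (a 2) (b 2) (c 2)

lemma t3_eq {A : Type*} [CommRing A] (t : A) (h : t ^ 3 + t ^ 2 - 2 * t - 1 = 0) :
    (t ^ 2 - 2) ^ 2 - 2 = 1 - t - t ^ 2 := by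
  linear_combination (t - 1) * h

lemma nrm_eq {A : Type*} [CommRing A] (t : A) (h : t ^ 3 + t ^ 2 - 2 * t - 1 = 0) (a b c : A) :
    (a + b * t + c * t ^ 2) * (a + b * (t ^ 2 - 2) + c * (t ^ 2 - 2) ^ 2)
      * (a + b * (1 - t - t ^ 2) + c * (1 - t - t ^ 2) ^ 2) = nrm a b c := by
  unfold nrm
  linear_combination (((2)*t^1)*(a*a*c) + ((-1)*t^1)*(a*b*b) + ((-3)*t^0 + (1)*t^1 + (3)*t^2)*(a*b*c) + ((2)*t^0
    + (4)*t^1 + (-3)*t^2 + (-2)*t^3 + (1)*t^4 + (1)*t^5)*(a*c*c) + ((1)*t^0 +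
    (-1)*t^2)*(b*b*b) + ((-1)*t^0 + (1)*t^2)*(b*b*c) + ((-2)*t^0 + (4)*t^2 + (-2)*t^3 +
    (-3)*t^4 + (1)*t^5 + (1)*t^6)*(b*c*c) + ((1)*t^0 + (-2)*t^1 + (1)*t^2 + (5)*t^3 + (-3)*t^4
    + (-4)*t^5 + (1)*t^6 + (1)*t^7)*(c*c*c)) * h

lemma trc_eq {A : Type*} [CommRing A] (t : A) (h : t ^ 3 + t ^ 2 - 2 * t - 1 = 0)
    (a0 b0 c0 a1 b1 c1 a2 b2 c2 : A) :
    (a0 + b0 * t + c0 * t ^ 2) * (a1 + b1 * (t ^ 2 - 2) + c1 * (t ^ 2 - 2) ^ 2)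
      * (a2 + b2 * (1 - t - t ^ 2) + c2 * (1 - t - t ^ 2) ^ 2)
    + (a0 + b0 * (t ^ 2 - 2) + c0 * (t ^ 2 - 2) ^ 2)
      * (a1 + b1 * (1 - t - t ^ 2) + c1 * (1 - t - t ^ 2) ^ 2) * (a2 + b2 * t + c2 * t ^ 2)
    + (a0 + b0 * (1 - t - t ^ 2) + c0 * (1 - t - t ^ 2) ^ 2)
      * (a1 + b1 * t + c1 * t ^ 2) * (a2 + b2 * (t ^ 2 - 2) + c2 * (t ^ 2 - 2) ^ 2)
    = trc a0 b0 c0 a1 b1 c1 a2 b2 c2 := by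
  unfold trc
  linear_combination (((2)*t^1)*(a0*a1*c2) + ((-1)*t^1)*(a0*b1*b2) + ((-2)*t^0 + (-4)*t^1 + (2)*t^2 +
    (1)*t^3)*(a0*b1*c2) + ((2)*t^1)*(a0*c1*a2) + ((-1)*t^0 + (5)*t^1 + (1)*t^2 +
    (-1)*t^3)*(a0*c1*b2) + ((2)*t^0 + (4)*t^1 + (-3)*t^2 + (-2)*t^3 + (1)*t^4 +
    (1)*t^5)*(a0*c1*c2) + ((-1)*t^1)*(b0*a1*b2) + ((-1)*t^0 + (5)*t^1 + (1)*t^2 +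
    (-1)*t^3)*(b0*a1*c2) + ((-1)*t^1)*(b0*b1*a2) + ((3)*t^0 + (-3)*t^2)*(b0*b1*b2) + ((-1)*t^0
    + (1)*t^2)*(b0*b1*c2) + ((-2)*t^0 + (-4)*t^1 + (2)*t^2 + (1)*t^3)*(b0*c1*a2) + ((-1)*t^0 +
    (1)*t^2)*(b0*c1*b2) + ((-2)*t^0 + (4)*t^2 + (-2)*t^3 + (-3)*t^4 + (1)*t^5 +
    (1)*t^6)*(b0*c1*c2) + ((2)*t^1)*(c0*a1*a2) + ((-2)*t^0 + (-4)*t^1 + (2)*t^2 +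
    (1)*t^3)*(c0*a1*b2) + ((2)*t^0 + (4)*t^1 + (-3)*t^2 + (-2)*t^3 + (1)*t^4 +
    (1)*t^5)*(c0*a1*c2) + ((-1)*t^0 + (5)*t^1 + (1)*t^2 + (-1)*t^3)*(c0*b1*a2) + ((-1)*t^0 +
    (1)*t^2)*(c0*b1*b2) + ((-2)*t^0 + (4)*t^2 + (-2)*t^3 + (-3)*t^4 + (1)*t^5 +
    (1)*t^6)*(c0*b1*c2) + ((2)*t^0 + (4)*t^1 + (-3)*t^2 + (-2)*t^3 + (1)*t^4 +
    (1)*t^5)*(c0*c1*a2) + ((-2)*t^0 + (4)*t^2 + (-2)*t^3 + (-3)*t^4 + (1)*t^5 +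
    (1)*t^6)*(c0*c1*b2) + ((3)*t^0 + (-6)*t^1 + (3)*t^2 + (15)*t^3 + (-9)*t^4 + (-12)*t^5 +
    (3)*t^6 + (3)*t^7)*(c0*c1*c2)) * h

lemma rdn_map {A B : Type*} [CommRing A] [CommRing B] (f : A →+* B) (w : A) (a b c : Fin 3 → A) :
    f (rdn w a b c) = rdn (f w) (fun l => f (a l)) (fun l => f (b l)) (fun l => f (c l)) := by
  simp only [rdn, nrm, trc, map_add, map_sub, map_mul, map_neg, map_one, map_pow, map_ofNat]

lemma nrm_map {A B : Type*} [CommRing A] [CommRing B] (f : A →+* B) (a b c : A) :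
    f (nrm a b c) = nrm (f a) (f b) (f c) := by
  simp only [nrm, map_add, map_mul, map_neg, map_one, map_ofNat]

/-- Multiplication by `θ - 2` scales the reduced norm by `-7`. -/
lemma rdn_shift {A : Type*} [CommRing A] (w : A) (a b c : Fin 3 → A) :
    rdn w (fun l => -2 * a l + c l) (fun l => a l - 2 * b l + 2 * c l) (fun l => b l - 3 * c l)
      = -7 * rdn w a b c := by
  simp only [rdn, nrm, trc]
  ring

lemma rdn_zmod (w : ZMod 7) (a b c : Fin 3 → ZMod 7) :
    rdn w a b c = (a 0 + 2 * b 0 + 4 * c 0) ^ 3 + w * (a 1 + 2 * b 1 + 4 * c 1) ^ 3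
      + w ^ 2 * (a 2 + 2 * b 2 + 4 * c 2) ^ 3 - 3 * w * (a 0 + 2 * b 0 + 4 * c 0)
        * (a 1 + 2 * b 1 + 4 * c 1) * (a 2 + 2 * b 2 + 4 * c 2) := by
  have h7 : (7 : ZMod 7) = 0 := by decide
  have h : (2 : ZMod 7) ^ 3 + 2 ^ 2 - 2 * 2 - 1 = 0 := by decide
  have e1 : (2 : ZMod 7) ^ 2 - 2 = 2 := by decide
  have e2 : (1 : ZMod 7) - 2 - 2 ^ 2 = 2 := by decide
  have e3 : (2 : ZMod 7) ^ 2 = 4 := by decide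
  unfold rdn
  rw [← trc_eq 2 h, ← nrm_eq 2 h, ← nrm_eq 2 h, ← nrm_eq 2 h]
  rw [e1, e2, e3]
  ring

lemma zmod_two : ∀ u v z : ZMod 7, u ^ 3 + 2 * v ^ 3 + 2 ^ 2 * z ^ 3 - 3 * 2 * u * v * z = 0 →
    u = 0 ∧ v = 0 ∧ z = 0 := by
  decide

lemma zmod_four : ∀ u v z : ZMod 7, u ^ 3 + 4 * v ^ 3 + 4 ^ 2 * z ^ 3 - 3 * 4 * u * v * z = 0 →
    u = 0 ∧ v = 0 ∧ z = 0 := by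
  decide

/-- The abstract ring of Eisenstein integers. -/
abbrev EI := QuadraticAlgebra ℤ (-1) (-1)

/-- The generator of `EI`. -/
def omE : EI := ⟨0, 1⟩

/-- The ring homomorphism out of `EI` attached to a root of `x² + x + 1`. -/
def evE {A : Type*} [CommRing A] (u : A) (h : u ^ 2 + u + 1 = 0) : EI →+* A :=
  (QuadraticAlgebra.lift (R := ℤ) (a := -1) (b := -1)
    ⟨u, by simp; linear_combination h⟩ : EI →ₐ[ℤ] A).toRingHom

lemma evE_apply {A : Type*} [CommRing A] (u : A) (h : u ^ 2 + u + 1 = 0) (z : EI) :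
    evE u h z = (z.re : A) + (z.im : A) * u := by
  simp [evE, QuadraticAlgebra.lift]

lemma z2 : (2 : ZMod 7) ^ 2 + 2 + 1 = 0 := by decide
lemma z4 : (4 : ZMod 7) ^ 2 + 4 + 1 = 0 := by decide

lemma seven_dvd (z : EI) (h2 : evE (2 : ZMod 7) z2 z = 0) (h4 : evE (4 : ZMod 7) z4 z = 0) :
    ∃ k : EI, z = 7 * k := by
  rw [evE_apply] at h2 h4
  have a2 : ((z.re + z.im * 2 : ℤ) : ZMod 7) = 0 := by push_cast; exact h2
  have a4 : ((z.re + z.im * 4 : ℤ) : ZMod 7) = 0 := by push_cast; exact h4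
  rw [ZMod.intCast_zmod_eq_zero_iff_dvd] at a2 a4
  obtain ⟨m, hm⟩ : ∃ m, z.re = 7 * m := ⟨z.re / 7, by omega⟩
  obtain ⟨n, hn⟩ : ∃ n, z.im = 7 * n := ⟨z.im / 7, by omega⟩
  refine ⟨⟨m, n⟩, ?_⟩
  have h7 : (7 : EI) = ⟨7, 0⟩ := rfl
  rw [h7]
  ext <;> simp [hm, hn]

lemma rdn_dvd (a b c : Fin 3 → EI) (h : rdn omE a b c = 0) (l : Fin 3) :
    ∃ k : EI, a l + 2 * b l + 4 * c l = 7 * k := by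
  have h2 := congrArg (evE (2 : ZMod 7) z2) h
  have h4 := congrArg (evE (4 : ZMod 7) z4) h
  rw [rdn_map, rdn_zmod, map_zero] at h2 h4
  have w2 : evE (2 : ZMod 7) z2 omE = 2 := by simp [evE_apply, omE]
  have w4 : evE (4 : ZMod 7) z4 omE = 4 := by simp [evE_apply, omE]
  rw [w2] at h2
  rw [w4] at h4
  obtain ⟨p0, p1, p2⟩ := zmod_two _ _ _ h2
  obtain ⟨q0, q1, q2⟩ := zmod_four _ _ _ h4
  apply seven_dvd
  · fin_cases l <;> simpa using by assumption
  · fin_cases l <;> simpa using by assumption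

lemma EI_seven {z : EI} (h : -7 * z = 0) : z = 0 := by
  have h7 : (-7 : EI) = ⟨-7, 0⟩ := rfl
  rw [h7] at h
  have h1 := congrArg QuadraticAlgebra.re h
  have h2 := congrArg QuadraticAlgebra.im h
  simp at h1 h2
  ext <;> simp [h1, h2]

lemma rdn_step (a b c : Fin 3 → EI) (h : rdn omE a b c = 0) :
    ∃ a' b' c' : Fin 3 → EI, rdn omE a' b' c' = 0 ∧ ∀ l, a l = -2 * a' l + c' l ∧
      b l = a' l - 2 * b' l + 2 * c' l ∧ c l = b' l - 3 * c' l := by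
  choose k hk using rdn_dvd a b c h
  have e : ∀ l, a l = -2 * (b l + 2 * c l - 4 * k l) + (- k l) ∧
      b l = (b l + 2 * c l - 4 * k l) - 2 * (c l - 3 * k l) + 2 * (- k l) ∧
      c l = (c l - 3 * k l) - 3 * (- k l) := by
    intro l
    refine ⟨?_, ?_, ?_⟩
    · linear_combination hk l
    · ring
    · ring
  refine ⟨fun l => b l + 2 * c l - 4 * k l, fun l => c l - 3 * k l, fun l => - k l, ?_, e⟩
  apply EI_seven
  rw [← rdn_shift, ← h]
  congr 1
  · funext l; exact (e l).1.symm
  · funext l; exact (e l).2.1.symm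
  · funext l; exact (e l).2.2.symm

lemma rdn_pow (n : ℕ) : ∀ (a b c : Fin 3 → EI), rdn omE a b c = 0 →
    ∀ l, (7 : EI) ^ n ∣ a l ∧ (7 : EI) ^ n ∣ b l ∧ (7 : EI) ^ n ∣ c l := by
  induction n with
  | zero => intro a b c _ l; simp
  | succ n ih =>
    intro a b c h l
    obtain ⟨a1, b1, c1, h1, e1⟩ := rdn_step a b c h
    obtain ⟨a2, b2, c2, h2, e2⟩ := rdn_step a1 b1 c1 h1
    obtain ⟨a3, b3, c3, h3, e3⟩ := rdn_step a2 b2 c2 h2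
    obtain ⟨⟨u, hu⟩, ⟨v, hv⟩, ⟨z, hz⟩⟩ := ih a3 b3 c3 h3 l
    obtain ⟨p1, p2, p3⟩ := e1 l
    obtain ⟨q1, q2, q3⟩ := e2 l
    obtain ⟨r1, r2, r3⟩ := e3 l
    rw [p1, p2, p3, q1, q2, q3, r1, r2, r3, hu, hv, hz]
    refine ⟨⟨-u - v + 3 * z, ?_⟩, ⟨2 * u - 3 * v + 5 * z, ?_⟩, ⟨-u + 3 * v - 6 * z, ?_⟩⟩
    · ring
    · ring
    · ring

lemma EI_inf (z : EI) (h : ∀ n : ℕ, (7 : EI) ^ n ∣ z) : z = 0 := by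
  have key : ∀ m : ℤ, (∀ n : ℕ, (7 : ℤ) ^ n ∣ m) → m = 0 := by
    intro m hm
    apply Int.eq_zero_of_abs_lt_dvd (hm m.natAbs)
    have : m.natAbs < 7 ^ m.natAbs := Nat.lt_pow_self (by norm_num)
    zify at this
    exact this
  have hp : ∀ n : ℕ, (7 : EI) ^ n = algebraMap ℤ EI (7 ^ n) := by intro n; simp
  ext
  · apply key
    intro n
    have := h n
    rw [hp, QuadraticAlgebra.algebraMap_dvd_iff] at this
    exact this.1
  · apply key
    intro n
    have := h n
    rw [hp, QuadraticAlgebra.algebraMap_dvd_iff] at this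
    exact this.2

lemma rdn_ne (a b c : Fin 3 → EI) (h : rdn omE a b c = 0) (l : Fin 3) :
    a l = 0 ∧ b l = 0 ∧ c l = 0 :=
  ⟨EI_inf _ fun n => (rdn_pow n a b c h l).1, EI_inf _ fun n => (rdn_pow n a b c h l).2.1,
    EI_inf _ fun n => (rdn_pow n a b c h l).2.2⟩

lemma nrm_ne (a b c : EI) (h : nrm a b c = 0) : a = 0 ∧ b = 0 ∧ c = 0 := by
  have := rdn_ne ![a, 0, 0] ![b, 0, 0] ![c, 0, 0] (by simpa [rdn, nrm, trc] using h) 0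
  simpa using this

lemma om_rel : om ^ 2 + om + 1 = 0 := by
  have hp : IsPrimitiveRoot om 3 := by
    have := Complex.isPrimitiveRoot_exp 3 (by norm_num)
    simpa [om] using this
  have h1 : om ≠ 1 := hp.ne_one (by norm_num)
  have h3 : om ^ 3 = 1 := hp.pow_eq_one
  have : (om - 1) * (om ^ 2 + om + 1) = 0 := by linear_combination h3
  exact (mul_eq_zero.mp this).resolve_left (sub_ne_zero.mpr h1)

lemma t1_rel : t1 ^ 3 + t1 ^ 2 - 2 * t1 - 1 = 0 := by
  set z : ℂ := Complex.exp (2 * Real.pi * Complex.I / 7) with hz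
  have hp : IsPrimitiveRoot z 7 := by
    have := Complex.isPrimitiveRoot_exp 7 (by norm_num)
    simpa [hz] using this
  have h0 : z ≠ 0 := Complex.exp_ne_zero _
  have ht : t1 = z + z⁻¹ := by
    rw [t1, hz, ← Complex.exp_neg, Complex.ofReal_cos, Complex.cos]
    push_cast
    have e1 : 2 * (Real.pi : ℂ) / 7 * I = 2 * Real.pi * I / 7 := by ring
    have e2 : -(2 * (Real.pi : ℂ) / 7) * I = -(2 * Real.pi * I / 7) := by ring
    rw [e1, e2]
    ring
  have h1 : z ≠ 1 := hp.ne_one (by norm_num)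
  have h7 : z ^ 7 = 1 := hp.pow_eq_one
  have h6 : z ^ 6 + z ^ 5 + z ^ 4 + z ^ 3 + z ^ 2 + z + 1 = 0 := by
    have : (z - 1) * (z ^ 6 + z ^ 5 + z ^ 4 + z ^ 3 + z ^ 2 + z + 1) = 0 := by
      linear_combination h7
    exact (mul_eq_zero.mp this).resolve_left (sub_ne_zero.mpr h1)
  rw [ht]
  field_simp
  linear_combination h6

/-- The embedding of the Eisenstein integers. -/
def phi : EI →+* ℂ := evE om om_rel

lemma phi_mk (p : ℤ × ℤ) : phi ⟨p.1, p.2⟩ = E p := by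
  simp [phi, evE_apply, E]

lemma phi_omE : phi omE = om := by
  simp [phi, evE_apply, omE]

lemma normSq_phi (z : EI) : Complex.normSq (phi z) = ((QuadraticAlgebra.norm z : ℤ) : ℝ) := by
  have h1 := congrArg Complex.re om_rel
  have h2 := congrArg Complex.im om_rel
  simp [pow_two] at h1 h2
  have hy : om.im ≠ 0 := by
    intro h
    rw [h] at h1
    nlinarith [sq_nonneg (2 * om.re + 1)]
  have hx : om.re = -1 / 2 := by
    have : om.im * (2 * om.re + 1) = 0 := by linear_combination h2
    have := (mul_eq_zero.mp this).resolve_left hy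
    linarith
  have hy2 : om.im * om.im = 3 / 4 := by
    rw [hx] at h1
    linarith
  rw [phi, evE_apply, QuadraticAlgebra.norm_def, Complex.normSq_apply]
  simp [hx]
  linear_combination (z.im : ℝ) ^ 2 * hy2

lemma phi_inj (z : EI) (h : phi z = 0) : z = 0 := by
  have h0 := normSq_phi z
  rw [h, map_zero, QuadraticAlgebra.norm_def] at h0
  have h1 : z.re * z.re - z.re * z.im + z.im * z.im = 0 := by
    have h2 : (0 : ℤ) = z.re * z.re + -1 * z.re * z.im - -1 * z.im * z.im := by exact_mod_cast h0
    linear_combination -h2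
  have hi : z.im = 0 := by nlinarith [sq_nonneg (2 * z.re - z.im), sq_nonneg z.im]
  have hr : z.re = 0 := by
    rw [hi] at h1
    nlinarith
  ext <;> simp [hi, hr]

lemma t3_c : t3 = 1 - t1 - t1 ^ 2 := by
  rw [t3, t2]; exact t3_eq _ t1_rel

lemma one_le_normSq (z : EI) (h : z ≠ 0) : 1 ≤ Complex.normSq (phi z) := by
  have hp : 0 < Complex.normSq (phi z) :=
    Complex.normSq_pos.mpr fun h' => h (phi_inj z h')
  rw [normSq_phi] at hp ⊢
  exact_mod_cast hp

lemma beta_nrm (p q r : EI) :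
    (phi p + phi q * t1 + phi r * t1 ^ 2) * (phi p + phi q * t2 + phi r * t2 ^ 2)
        * (phi p + phi q * t3 + phi r * t3 ^ 2) = phi (nrm p q r) := by
  rw [t3_c, t2, nrm_map]
  exact nrm_eq t1 t1_rel _ _ _

lemma ev_inj (p q r : EI) (h : phi p + phi q * t1 + phi r * t1 ^ 2 = 0) :
    p = 0 ∧ q = 0 ∧ r = 0 := by
  apply nrm_ne
  apply phi_inj
  rw [← beta_nrm, h]
  ring

lemma det_code (β1 β2 β3 : ℂ) (a b c : Fin 3 → ℤ × ℤ) :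
    Matrix.det !![β1 * X a b c 0 t1, β1 * X a b c 1 t1, β1 * X a b c 2 t1;
        om * (β2 * X a b c 2 t2), β2 * X a b c 0 t2, β2 * X a b c 1 t2;
        om * (β3 * X a b c 1 t3), om * (β3 * X a b c 2 t3), β3 * X a b c 0 t3]
      = (β1 * β2 * β3) * phi (rdn omE (fun l => ⟨(a l).1, (a l).2⟩)
          (fun l => ⟨(b l).1, (b l).2⟩) (fun l => ⟨(c l).1, (c l).2⟩)) := by
  rw [rdn_map, phi_omE]
  simp only [phi_mk]
  unfold rdn
  rw [← trc_eq t1 t1_rel, ← nrm_eq t1 t1_rel, ← nrm_eq t1 t1_rel, ← nrm_eq t1 t1_rel]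
  rw [← t3_c, ← t2, Matrix.det_fin_three]
  simp only [X, Matrix.of_apply, Matrix.cons_val]
  ring

lemma om_mem : om ∈ OL3 := Subring.subset_closure (by simp)
lemma t1_mem : t1 ∈ OL3 := Subring.subset_closure (by simp)

lemma phi_mem (z : EI) : phi z ∈ OL3 := by
  rw [phi, evE_apply]
  exact add_mem (intCast_mem _ _) (mul_mem (intCast_mem _ _) om_mem)

lemma ev_mem (p q r : EI) : phi p + phi q * t1 + phi r * t1 ^ 2 ∈ OL3 :=
  add_mem (add_mem (phi_mem _) (mul_mem (phi_mem _) t1_mem))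
    (mul_mem (phi_mem _) (pow_mem t1_mem 2))

lemma ev_mul (p q r x y z : EI) :
    (phi p + phi q * t1 + phi r * t1 ^ 2) * (phi x + phi y * t1 + phi z * t1 ^ 2)
      = phi (p * x + r * y + (q - r) * z) + phi (q * x + (p + 2 * r) * y + (2 * q - r) * z) * t1
        + phi (r * x + (q - r) * y + (p - q + 3 * r) * z) * t1 ^ 2 := by
  simp only [map_add, map_sub, map_mul, map_ofNat]
  linear_combination (phi q * phi z + phi r * phi y + phi r * phi z * (t1 - 1)) * t1_rel

lemma ev_surj (x : ℂ) (hx : x ∈ OL3) : ∃ p q r : EI, phi p + phi q * t1 + phi r * t1 ^ 2 = x := by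
  refine Subring.closure_induction (p := fun x _ => ∃ p q r : EI,
    phi p + phi q * t1 + phi r * t1 ^ 2 = x) ?_ ?_ ?_ ?_ ?_ ?_ hx
  · intro x hx
    rcases hx with rfl | rfl
    · exact ⟨omE, 0, 0, by simp [phi_omE]⟩
    · exact ⟨0, 1, 0, by simp⟩
  · exact ⟨0, 0, 0, by simp⟩
  · exact ⟨1, 0, 0, by simp⟩
  · rintro x y - - ⟨p, q, r, rfl⟩ ⟨p', q', r', rfl⟩
    exact ⟨p + p', q + q', r + r', by simp only [map_add]; ring⟩
  · rintro x - ⟨p, q, r, rfl⟩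
    exact ⟨-p, -q, -r, by simp only [map_neg]; ring⟩
  · rintro x y - - ⟨p, q, r, rfl⟩ ⟨p', q', r', rfl⟩
    exact ⟨_, _, _, (ev_mul p q r p' q' r').symm⟩

instance algEI : Algebra EI OL3 := (phi.codRestrict OL3 phi_mem).toAlgebra

lemma smul_coe (z : EI) (x : OL3) : ((z • x : OL3) : ℂ) = phi z * x := rfl

/-- Coordinates on `O_L`. -/
def evL : (Fin 3 → EI) →ₗ[EI] OL3 where
  toFun v := ⟨phi (v 0) + phi (v 1) * t1 + phi (v 2) * t1 ^ 2, ev_mem _ _ _⟩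
  map_add' u v := by
    apply Subtype.ext
    simp only [Pi.add_apply, map_add, Subring.coe_add]
    ring
  map_smul' s v := by
    apply Subtype.ext
    simp only [Pi.smul_apply, smul_eq_mul, map_mul, RingHom.id_apply, smul_coe]
    ring

lemma evL_coe (v : Fin 3 → EI) :
    ((evL v : OL3) : ℂ) = phi (v 0) + phi (v 1) * t1 + phi (v 2) * t1 ^ 2 := rfl

lemma evL_bij : Function.Bijective evL := by
  constructor
  · rw [← LinearMap.ker_eq_bot, LinearMap.ker_eq_bot']
    intro v hv
    have h := congrArg (Subtype.val) hv
    rw [evL_coe] at h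
    obtain ⟨h0, h1, h2⟩ := ev_inj _ _ _ h
    funext l
    fin_cases l <;> simpa
  · intro x
    obtain ⟨p, q, r, h⟩ := ev_surj x.1 x.2
    exact ⟨![p, q, r], Subtype.ext (by rw [evL_coe]; simpa using h)⟩

/-- Coordinates on `O_L` as an equivalence. -/
def evEq : (Fin 3 → EI) ≃ₗ[EI] OL3 := LinearEquiv.ofBijective evL evL_bij

instance : Module.Free EI OL3 := Module.Free.of_equiv evEq
instance : Module.Finite EI OL3 := Module.Finite.equiv evEq
instance : Module.Free ℤ OL3 := Module.Free.trans (S := EI)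
instance : Module.Finite ℤ OL3 := Module.Finite.trans EI _

/-- The matrix of multiplication by `p + q θ + r θ²`. -/
def mulM (p q r : EI) : Matrix (Fin 3) (Fin 3) EI :=
  !![p, r, q - r; q, p + 2 * r, 2 * q - r; r, q - r, p - q + 3 * r]

lemma det_mulM (p q r : EI) : (mulM p q r).det = nrm p q r := by
  rw [Matrix.det_fin_three]
  simp only [mulM, nrm, Matrix.of_apply, Matrix.cons_val]
  ring

lemma det_mul (p q r : EI) (β : OL3) (hβ : (β : ℂ) = phi p + phi q * t1 + phi r * t1 ^ 2) :
    LinearMap.det (LinearMap.mulLeft EI β) = nrm p q r := by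
  rw [← det_mulM, ← LinearMap.det_toLin', ← LinearMap.det_conj (Matrix.toLin' (mulM p q r)) evEq]
  congr 1
  ext x
  obtain ⟨v, rfl⟩ := evEq.surjective x
  simp only [LinearMap.coe_comp, LinearEquiv.coe_coe, Function.comp_apply,
    LinearEquiv.symm_apply_apply, LinearMap.mulLeft_apply, Subring.coe_mul]
  change (β : ℂ) * (evL v : OL3) = (evL (Matrix.toLin' (mulM p q r) v) : OL3)
  rw [evL_coe, evL_coe, hβ, ev_mul]
  simp [mulM, Matrix.mulVec, dotProduct, Fin.sum_univ_three]

lemma norm_eq' (d : EI) : Algebra.norm ℤ d = QuadraticAlgebra.norm d := by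
  rw [← QuadraticAlgebra.det_toLinearMap_eq_norm]
  rfl

lemma card_quot_s15 (p q r : EI) (β : OL3) (hβ : (β : ℂ) = phi p + phi q * t1 + phi r * t1 ^ 2)
    (h0 : β ≠ 0) :
    Complex.normSq (phi (nrm p q r)) = (Nat.card (OL3 ⧸ Ideal.span {β}) : ℝ) := by
  have h1 := Submodule.natAbs_det_equiv ((Ideal.span {β}).restrictScalars ℤ)
    (LinearEquiv.toSpanNonzeroSingleton OL3 OL3 β h0).toAddEquiv
  have h2 : Nat.card (OL3 ⧸ Ideal.span {β})
      = Nat.card (OL3 ⧸ (Ideal.span {β}).restrictScalars ℤ) := rfl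
  rw [h2, ← h1]
  have h3 : ((Ideal.span {β}).restrictScalars ℤ).subtype ∘ₗ AddMonoidHom.toIntLinearMap
      ((LinearEquiv.toSpanNonzeroSingleton OL3 OL3 β h0).toAddEquiv : OL3 →+ Ideal.span {β})
      = (LinearMap.mulLeft EI β).restrictScalars ℤ := by
    apply LinearMap.ext
    intro x
    exact mul_comm x β
  have h4 := congrArg LinearMap.det h3
  rw [LinearMap.det_restrictScalars, det_mul p q r β hβ, norm_eq'] at h4
  have h5 : (0 : ℝ) ≤ ((QuadraticAlgebra.norm (nrm p q r) : ℤ) : ℝ) := by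
    rw [← normSq_phi]; exact Complex.normSq_nonneg _
  rw [normSq_phi]
  have h6 : (0 : ℤ) ≤ QuadraticAlgebra.norm (nrm p q r) := by exact_mod_cast h5
  have h7 := Int.natAbs_of_nonneg h6
  have h8 : ((QuadraticAlgebra.norm (nrm p q r)).natAbs : ℝ)
      = ((QuadraticAlgebra.norm (nrm p q r) : ℤ) : ℝ) := by
    rw [← Int.cast_natCast, h7]
  rw [← h8, ← h4]
  rfl

/-- For a nonzero `β = p + q·θ₁ + r·θ₁² ∈ O_L = ℤ[ω][θ₁]` (with conjugates
`σ^m(β) = p + q·θ_{m+1} + r·θ_{m+1}²`), the minimum of the squared modulus of the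
determinant of the `3×3` perfect-code matrix over triples
`(x₀,x₁,x₂) ∈ (β·O_L)³ \ {(0,0,0)}` equals `|β·σ(β)·σ²(β)|²`, which equals the
absolute norm `N(β·O_L) = |O_L/β·O_L|`. -/
theorem stmt15 (p q r : ℤ × ℤ) (hβ : ¬(p = 0 ∧ q = 0 ∧ r = 0))
    (hmem : E p + E q * t1 + E r * t1 ^ 2 ∈ OL3) :
    IsLeast { v : ℝ | ∃ a b c : Fin 3 → ℤ × ℤ, ¬(∀ ℓ, a ℓ = 0 ∧ b ℓ = 0 ∧ c ℓ = 0) ∧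
      v = Complex.normSq (Matrix.det
        !![(E p + E q * t1 + E r * t1 ^ 2) * X a b c 0 t1,
           (E p + E q * t1 + E r * t1 ^ 2) * X a b c 1 t1,
           (E p + E q * t1 + E r * t1 ^ 2) * X a b c 2 t1;
           om * ((E p + E q * t2 + E r * t2 ^ 2) * X a b c 2 t2),
           (E p + E q * t2 + E r * t2 ^ 2) * X a b c 0 t2,
           (E p + E q * t2 + E r * t2 ^ 2) * X a b c 1 t2;
           om * ((E p + E q * t3 + E r * t3 ^ 2) * X a b c 1 t3),
           om * ((E p + E q * t3 + E r * t3 ^ 2) * X a b c 2 t3),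
           (E p + E q * t3 + E r * t3 ^ 2) * X a b c 0 t3]) }
      (Complex.normSq ((E p + E q * t1 + E r * t1 ^ 2) * (E p + E q * t2 + E r * t2 ^ 2)
        * (E p + E q * t3 + E r * t3 ^ 2))) ∧
    Complex.normSq ((E p + E q * t1 + E r * t1 ^ 2) * (E p + E q * t2 + E r * t2 ^ 2)
        * (E p + E q * t3 + E r * t3 ^ 2))
      = (Nat.card (↥OL3 ⧸ Ideal.span
          {(⟨E p + E q * t1 + E r * t1 ^ 2, hmem⟩ : OL3)}) : ℝ) := by
  obtain ⟨P, hP⟩ : ∃ P : EI, P = ⟨p.1, p.2⟩ := ⟨_, rfl⟩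
  obtain ⟨Q, hQ⟩ : ∃ Q : EI, Q = ⟨q.1, q.2⟩ := ⟨_, rfl⟩
  obtain ⟨R, hR⟩ : ∃ R : EI, R = ⟨r.1, r.2⟩ := ⟨_, rfl⟩
  have eP : E p = phi P := by rw [hP, phi_mk]
  have eQ : E q = phi Q := by rw [hQ, phi_mk]
  have eR : E r = phi R := by rw [hR, phi_mk]
  have hz : ∀ s : ℤ × ℤ, (⟨s.1, s.2⟩ : EI) = 0 → s = 0 := by
    intro s hs
    have h1 := congrArg QuadraticAlgebra.re hs
    have h2 := congrArg QuadraticAlgebra.im hs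
    exact Prod.ext h1 h2
  have hne : E p + E q * t1 + E r * t1 ^ 2 ≠ 0 := by
    rw [eP, eQ, eR]
    intro h
    obtain ⟨h0, h1, h2⟩ := ev_inj _ _ _ h
    exact hβ ⟨hz p (hP ▸ h0), hz q (hQ ▸ h1), hz r (hR ▸ h2)⟩
  refine ⟨⟨?_, ?_⟩, ?_⟩
  · refine ⟨![(1, 0), 0, 0], 0, 0, ?_, ?_⟩
    · intro h
      have := (h 0).1
      simp at this
    · rw [det_code]
      have : rdn omE (fun l => (⟨(![((1 : ℤ), (0 : ℤ)), 0, 0] l).1, (![((1 : ℤ), (0 : ℤ)), 0, 0] l).2⟩ : EI))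
          (fun l => ⟨((0 : Fin 3 → ℤ × ℤ) l).1, ((0 : Fin 3 → ℤ × ℤ) l).2⟩)
          (fun l => ⟨((0 : Fin 3 → ℤ × ℤ) l).1, ((0 : Fin 3 → ℤ × ℤ) l).2⟩) = 1 := by
        decide
      rw [this, map_one, mul_one]
  · rintro v ⟨a, b, c, habc, rfl⟩
    rw [det_code]
    refine le_of_le_of_eq ?_ (map_mul Complex.normSq _ _).symm
    refine le_mul_of_one_le_right (Complex.normSq_nonneg _) (one_le_normSq _ ?_)
    intro h
    apply habc
    intro l
    obtain ⟨h0, h1, h2⟩ := rdn_ne _ _ _ h l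
    exact ⟨hz _ h0, hz _ h1, hz _ h2⟩
  · have h0 : (⟨E p + E q * t1 + E r * t1 ^ 2, hmem⟩ : OL3) ≠ 0 := by
      intro h
      exact hne (congrArg Subtype.val h)
    rw [← card_quot_s15 P Q R _ (by rw [← eP, ← eQ, ← eR]) h0, ← beta_nrm, eP, eQ, eR]
end
end
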